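/- Let γ be a compact face of Γ and I ⊆ {1,…,n} such that ε = γ + ℝ_{≥0}^I is a face of Γ. Then for every a ∈ σ(ε) one has I = {i ∈ {1,…,n} : a_i = 0}. -/

import Mathlib

/-!
Let `a` satisfy `γ_a = ε = γ + ℝ_{≥0}^I`. Since `a` is nonnegative, `⟨a, ·⟩` attains its infimum
over `Γ` at a point of `S`, so `γ_a`, and hence `γ`, is nonempty (`faceAt_nonempty`).

If `i ∈ I`, then for `g ∈ γ` both `g` and `g + e_i` lie in `γ_a`, and comparing the values of
`⟨a, ·⟩` gives `a_i = 0`. Conversely, if `a_i = 0`, then `Γ` and `⟨a, ·⟩` are both stable under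
adding `t e_i`, `t ≥ 0`, so `γ_a` contains a ray in direction `e_i` (`add_mem_newtonPolyhedron`).
If `i ∉ I`, the `i`-th coordinate along this ray comes from `γ` alone, contradicting
boundedness of `γ`.
-/


open Finset Set Pointwise

noncomputable section

/-- Standard inner product on `ℝ^n`. -/
def dotR {n : ℕ} (a b : Fin n → ℝ) : ℝ := ∑ i, a i * b i

/-- The nonnegative orthant `ℝ_{≥0}^n`. -/
def nonnegOrthant (n : ℕ) : Set (Fin n → ℝ) := {x | ∀ i, 0 ≤ x i}

/-- Coercion of an integer lattice point to `ℝ^n`. -/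
def natCastVec {n : ℕ} (α : Fin n → ℕ) : Fin n → ℝ := fun i => (α i : ℝ)

/-- The Newton polyhedron of a finite set `S ⊆ ℕ^n`: the convex hull of `S + ℝ_{≥0}^n`. -/
def newtonPolyhedron {n : ℕ} (S : Finset (Fin n → ℕ)) : Set (Fin n → ℝ) :=
  convexHull ℝ {x | ∃ α ∈ S, ∃ v ∈ nonnegOrthant n, x = natCastVec α + v}

/-- `l_Γ(a) = inf {⟨a,b⟩ : b ∈ Γ}`. -/
def lGamma {n : ℕ} (S : Finset (Fin n → ℕ)) (a : Fin n → ℝ) : ℝ :=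
  sInf ((fun b => dotR a b) '' newtonPolyhedron S)

/-- `γ_a = {b ∈ Γ : ⟨a,b⟩ = l_Γ(a)}`. -/
def faceAt {n : ℕ} (S : Finset (Fin n → ℕ)) (a : Fin n → ℝ) : Set (Fin n → ℝ) :=
  {b ∈ newtonPolyhedron S | dotR a b = lGamma S a}

/-- A face of `Γ` is a set of the form `γ_a` with `a ∈ ℝ_{≥0}^n`. -/
def IsFaceOf {n : ℕ} (S : Finset (Fin n → ℕ)) (γ : Set (Fin n → ℝ)) : Prop :=
  ∃ a ∈ nonnegOrthant n, γ = faceAt S a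

/-- A proper face is a face different from `Γ`. -/
def IsProperFaceOf {n : ℕ} (S : Finset (Fin n → ℕ)) (γ : Set (Fin n → ℝ)) : Prop :=
  IsFaceOf S γ ∧ γ ≠ newtonPolyhedron S

/-- `σ(γ) = {a ∈ ℝ_{≥0}^n : γ_a = γ}`. -/
def sigmaCone {n : ℕ} (S : Finset (Fin n → ℕ)) (γ : Set (Fin n → ℝ)) : Set (Fin n → ℝ) :=
  {a ∈ nonnegOrthant n | faceAt S a = γ}

/-- `σ̄(γ)`, the closure of `σ(γ)` in `ℝ^n`. -/
def sigmaConeCl {n : ℕ} (S : Finset (Fin n → ℕ)) (γ : Set (Fin n → ℝ)) : Set (Fin n → ℝ) :=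
  closure (sigmaCone S γ)

/-- `F` is a face of the closed convex cone `C`: `F = {x ∈ C | λ x = 0}` for a linear form
`λ` nonnegative on `C`. -/
def IsConeFaceOf {n : ℕ} (C F : Set (Fin n → ℝ)) : Prop :=
  ∃ lam : (Fin n → ℝ) →ₗ[ℝ] ℝ, (∀ x ∈ C, 0 ≤ lam x) ∧ F = {x ∈ C | lam x = 0}

/-- The dimension of a subset of `ℝ^n`: the dimension of its affine span. -/
def dimSet {n : ℕ} (s : Set (Fin n → ℝ)) : ℕ :=
  Module.finrank ℝ (affineSpan ℝ s).direction

/-- `ℝ_{≥0}^I = {x ∈ ℝ_{≥0}^n : x_i = 0 for i ∉ I}`. -/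
def orthantOn (n : ℕ) (I : Set (Fin n)) : Set (Fin n → ℝ) :=
  {x | (∀ i, 0 ≤ x i) ∧ ∀ i ∉ I, x i = 0}

/-- `ℝ_{≥0}^{n₁} × ℝ_{>0}^{n₂} = {a ∈ ℝ_{≥0}^n : a_i > 0 for i > n₁}`. -/
def mixedOrthant (n n₁ : ℕ) : Set (Fin n → ℝ) :=
  {x | (∀ i, 0 ≤ x i) ∧ ∀ i : Fin n, n₁ ≤ (i : ℕ) → 0 < x i}

lemma dotR_add {n : ℕ} (a b c : Fin n → ℝ) : dotR a (b + c) = dotR a b + dotR a c := by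
  simp [dotR, mul_add, Finset.sum_add_distrib]

lemma dotR_smul {n : ℕ} (a b : Fin n → ℝ) (t : ℝ) : dotR a (t • b) = t * dotR a b := by
  simp only [dotR, Pi.smul_apply, smul_eq_mul, Finset.mul_sum]
  exact Finset.sum_congr rfl fun i _ => by ring

lemma dotR_single {n : ℕ} (a : Fin n → ℝ) (i : Fin n) (t : ℝ) :
    dotR a (Pi.single i t) = a i * t := by
  simp [dotR, Pi.single_apply]

lemma dotR_nonneg {n : ℕ} {a v : Fin n → ℝ} (ha : a ∈ nonnegOrthant n)
    (hv : v ∈ nonnegOrthant n) : 0 ≤ dotR a v :=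
  Finset.sum_nonneg fun i _ => mul_nonneg (ha i) (hv i)

lemma single_mem_nonnegOrthant {n : ℕ} (i : Fin n) {t : ℝ} (ht : 0 ≤ t) :
    (Pi.single i t : Fin n → ℝ) ∈ nonnegOrthant n := by
  have h : (0 : Fin n → ℝ) ≤ Pi.single i t := Pi.single_nonneg.2 ht
  exact h

lemma natCastVec_mem_newtonPolyhedron {n : ℕ} {S : Finset (Fin n → ℕ)} {α : Fin n → ℕ}
    (hα : α ∈ S) : natCastVec α ∈ newtonPolyhedron S :=
  subset_convexHull ℝ _ ⟨α, hα, 0, fun _ => le_rfl, (add_zero _).symm⟩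

lemma add_mem_newtonPolyhedron {n : ℕ} {S : Finset (Fin n → ℕ)} {b v : Fin n → ℝ}
    (hb : b ∈ newtonPolyhedron S) (hv : v ∈ nonnegOrthant n) : b + v ∈ newtonPolyhedron S := by
  -- The translate of `Γ` by `-v` is convex and contains the generators of `Γ`.
  have hconv : Convex ℝ {x | x + v ∈ newtonPolyhedron S} :=
    (convex_convexHull ℝ _).translate_preimage_left v
  refine convexHull_min ?_ hconv hb
  rintro x ⟨α, hα, w, hw, rfl⟩
  exact subset_convexHull ℝ _ ⟨α, hα, w + v, fun i => add_nonneg (hw i) (hv i), add_assoc _ _ _⟩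

/-- A nonnegative linear form attains its infimum over `Γ` at a point of `S`. -/
lemma faceAt_nonempty {n : ℕ} {S : Finset (Fin n → ℕ)} (hS : S.Nonempty) {a : Fin n → ℝ}
    (ha : a ∈ nonnegOrthant n) : (faceAt S a).Nonempty := by
  obtain ⟨α, hα, hmin⟩ := S.exists_min_image (fun β => dotR a (natCastVec β)) hS
  have hconv : Convex ℝ {x | dotR a (natCastVec α) ≤ dotR a x} :=
    convex_halfSpace_ge ⟨dotR_add a, fun t x => dotR_smul a x t⟩ _
  have hle : newtonPolyhedron S ⊆ {x | dotR a (natCastVec α) ≤ dotR a x} := by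
    refine convexHull_min ?_ hconv
    rintro x ⟨β, hβ, v, hv, rfl⟩
    have h₁ := hmin β hβ
    have h₂ := dotR_nonneg ha hv
    simp only [Set.mem_ofPred_eq, dotR_add]
    linarith
  have hleast : IsLeast ((fun b => dotR a b) '' newtonPolyhedron S) (dotR a (natCastVec α)) := by
    refine ⟨⟨_, natCastVec_mem_newtonPolyhedron hα, rfl⟩, ?_⟩
    rintro _ ⟨b, hb, rfl⟩
    exact hle hb
  exact ⟨_, natCastVec_mem_newtonPolyhedron hα, hleast.csInf_eq.symm⟩

theorem zero_coordinates_of_mem_sigmaCone_leant {n : ℕ} (hn : 1 ≤ n)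
    (S : Finset (Fin n → ℕ)) (hS : S.Nonempty) (hS0 : (0 : Fin n → ℕ) ∉ S)
    (γ : Set (Fin n → ℝ)) (hγ : IsFaceOf S γ) (hγc : Bornology.IsBounded γ)
    (I : Set (Fin n)) (hI : IsFaceOf S (γ + orthantOn n I)) :
    ∀ a ∈ sigmaCone S (γ + orthantOn n I), I = {i : Fin n | a i = 0} := by
  rintro a ⟨ha, hface⟩
  obtain ⟨b, hb⟩ := faceAt_nonempty hS ha
  ext i
  constructor
  · intro hi
    obtain ⟨g, hg, -, -, -⟩ := Set.mem_add.1 (hface ▸ hb)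
    have h₀ : g + 0 ∈ faceAt S a :=
      hface ▸ Set.add_mem_add hg ⟨fun _ => le_rfl, fun _ _ => rfl⟩
    have h₁ : g + Pi.single i 1 ∈ faceAt S a := by
      refine hface ▸ Set.add_mem_add hg ⟨single_mem_nonnegOrthant i zero_le_one, fun j hj => ?_⟩
      exact Pi.single_eq_of_ne (fun h : j = i => hj (h ▸ hi)) _
    have e₀ := h₀.2
    have e₁ := h₁.2
    rw [add_zero] at e₀
    rw [dotR_add, dotR_single] at e₁
    change a i = 0
    linarith
  · intro (hai : a i = 0)
    by_contra hi
    obtain ⟨C, hC⟩ := hγc.exists_norm_le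
    -- At parameter `t` the `i`-th coordinate is at least `C + 1`, since `b i + |b i| ≥ 0`.
    set t : ℝ := |C| + |b i| + 1 with ht
    have ht0 : 0 ≤ t := by positivity
    have hmem : b + Pi.single i t ∈ faceAt S a := by
      refine ⟨add_mem_newtonPolyhedron hb.1 (single_mem_nonnegOrthant i ht0), ?_⟩
      rw [dotR_add, dotR_single, hai, zero_mul, add_zero]
      exact hb.2
    obtain ⟨g, hg, v, hv, hgv⟩ := Set.mem_add.1 (hface ▸ hmem)
    have hgi : g i = b i + t := by
      simpa [hv.2 i hi] using congrFun hgv i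
    have h₁ : g i ≤ C := (le_abs_self _).trans ((norm_le_pi_norm g i).trans (hC g hg))
    have h₂ := neg_abs_le (b i)
    have h₃ := le_abs_self C
    linarith
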